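/- arXiv:2312.09772 — 4 statements merged into one kernel-verified Lean document; each statement's English description precedes it below -/
import Mathlib

section
/- First-variation formula in the space coordinate with boundary term: let t, x, η : ℝ → ℝ be twice continuously differentiable, let V : ℝ → ℝ be continuously differentiable, and let c, m ∈ ℝ with m ≠ 0. Then the derivative at ε = 0 of the map ε ↦ ∫_{γ_i}^{γ_f} (1/2)·((c² + 2V(x(γ) + ε·η(γ))/m)·t'(γ)² − (x'(γ) + ε·η'(γ))²) dγ equals ∫_{γ_i}^{γ_f} ((V'(x(γ))/m)·t'(γ)² + x''(γ))·η(γ) dγ − (x'(γ_f)·η(γ_f) − x'(γ_i)·η(γ_i)). -/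
/-!
Differentiating under the integral sign (`hasDerivAt_integral_of_continuous_deriv`) turns the
derivative at `ε = 0` into `∫ (V'(x)/m · ṫ² · η − ẋ · η̇)`; this is allowed because the
`ε`-derivative of the integrand is jointly continuous in `(ε, γ)`, hence bounded on a compact
rectangle. Integrating `ẋ · η̇` by parts gives the Euler–Lagrange term and the boundary term.
-/

/-- Leibniz rule at `0` for an integrand whose derivative in the parameter is jointly continuous:
the dominating function is a constant, by compactness of `[-1, 1] × [a, b]`. -/
theorem hasDerivAt_integral_of_continuous_deriv {F F' : ℝ → ℝ → ℝ} (a b : ℝ)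
    (hF : ∀ ε, Continuous (F ε)) (hF' : Continuous fun p : ℝ × ℝ => F' p.1 p.2)
    (hd : ∀ ε γ, HasDerivAt (fun e => F e γ) (F' ε γ) ε) :
    HasDerivAt (fun ε => ∫ γ in a..b, F ε γ) (∫ γ in a..b, F' 0 γ) 0 := by
  obtain ⟨C, hC⟩ := ((isCompact_Icc (a := (-1 : ℝ)) (b := 1)).prod
    (isCompact_uIcc (a := a) (b := b))).exists_bound_of_continuousOn hF'.continuousOn
  have hF'0 : Continuous (F' 0) := hF'.comp (by fun_prop : Continuous fun γ : ℝ => ((0 : ℝ), γ))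
  refine (intervalIntegral.hasDerivAt_integral_of_dominated_loc_of_deriv_le
    (bound := fun _ => C) (Icc_mem_nhds (by norm_num : (-1 : ℝ) < 0) one_pos)
    (.of_forall fun ε => (hF ε).aestronglyMeasurable) ((hF 0).intervalIntegrable a b)
    hF'0.aestronglyMeasurable (.of_forall fun γ hγ ε hε => ?_)
    intervalIntegrable_const (.of_forall fun γ _ ε _ => hd ε γ)).2
  exact hC (ε, γ) ⟨hε, Set.uIoc_subset_uIcc hγ⟩

/-- First variation of the world-line action in the space coordinate, in direction `η`:
the derivative at `ε = 0` of
`ε ↦ ∫ (1/2)((c² + 2V(x + εη)/m)·ṫ² − (ẋ + εη̇)²)` equals the Euler–Lagrange bulk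
term `∫ ((V'(x)/m)·ṫ² + ẍ)·η` minus the boundary term `ẋ(γf)η(γf) − ẋ(γi)η(γi)`. -/
theorem first_variation_space_coordinate
    (γi γf : ℝ) (t x η : ℝ → ℝ)
    (ht : ContDiff ℝ 2 t) (hx : ContDiff ℝ 2 x) (hη : ContDiff ℝ 2 η)
    (V : ℝ → ℝ) (hV : ContDiff ℝ 1 V) (c m : ℝ) (hm : m ≠ 0) :
    deriv (fun ε : ℝ => ∫ γ in γi..γf, (1/2 : ℝ) *
        ((c^2 + 2 * V (x γ + ε * η γ) / m) * (deriv t γ)^2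
          - (deriv x γ + ε * deriv η γ)^2)) 0
      = (∫ γ in γi..γf,
          ((deriv V (x γ) / m) * (deriv t γ)^2 + deriv (deriv x) γ) * η γ)
        - (deriv x γf * η γf - deriv x γi * η γi) := by
  have hdt : Continuous (deriv t) := ht.continuous_deriv (by norm_num)
  have hdx : Continuous (deriv x) := hx.continuous_deriv (by norm_num)
  have hdη : Continuous (deriv η) := hη.continuous_deriv (by norm_num)
  have hdV : Continuous (deriv V) := hV.continuous_deriv le_rfl
  have hx1 : ContDiff ℝ 1 (deriv x) := ((contDiff_succ_iff_deriv (n := 1)).1 hx).2.2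
  have hddx : Continuous (deriv (deriv x)) := hx1.continuous_deriv le_rfl
  have hVc := hV.continuous
  have hxc := hx.continuous
  have hηc := hη.continuous
  have key := hasDerivAt_integral_of_continuous_deriv
    (F := fun ε γ => (1/2 : ℝ) * ((c^2 + 2 * V (x γ + ε * η γ) / m) * (deriv t γ)^2
          - (deriv x γ + ε * deriv η γ)^2))
    (F' := fun ε γ => deriv V (x γ + ε * η γ) * η γ / m * (deriv t γ)^2
          - (deriv x γ + ε * deriv η γ) * deriv η γ) γi γf
    (fun ε => by fun_prop) (by fun_prop) (fun ε γ => by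
      have h1 : HasDerivAt (fun e : ℝ => x γ + e * η γ) (η γ) ε := by
        simpa using ((hasDerivAt_id ε).mul_const (η γ)).const_add (x γ)
      have h2 : HasDerivAt (fun e : ℝ => deriv x γ + e * deriv η γ) (deriv η γ) ε := by
        simpa using ((hasDerivAt_id ε).mul_const (deriv η γ)).const_add (deriv x γ)
      have h3 : HasDerivAt (fun e : ℝ => V (x γ + e * η γ))
          (deriv V (x γ + ε * η γ) * η γ) ε :=
        ((hV.differentiable one_ne_zero) _).hasDerivAt.comp ε h1
      have h4 := ((((((h3.const_mul 2).div_const m).const_add (c^2)).mul_const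
        ((deriv t γ)^2)).sub (h2.pow 2)).const_mul (1/2 : ℝ))
      refine h4.congr_deriv ?_
      push_cast
      ring)
  rw [key.deriv]
  have parts := intervalIntegral.integral_mul_deriv_eq_deriv_mul (a := γi) (b := γf)
    (fun γ _ => (hx1.differentiable one_ne_zero γ).hasDerivAt)
    (fun γ _ => (hη.differentiable two_ne_zero γ).hasDerivAt)
    (hddx.intervalIntegrable _ _) (hdη.intervalIntegrable _ _)
  have hA : Continuous fun γ => deriv V (x γ) * η γ / m * (deriv t γ)^2 := by fun_prop
  have hB : Continuous fun γ => deriv x γ * deriv η γ := by fun_prop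
  have hC : Continuous fun γ => deriv (deriv x) γ * η γ := by fun_prop
  have lhs := intervalIntegral.integral_sub
    (hA.intervalIntegrable (μ := MeasureTheory.volume) γi γf) (hB.intervalIntegrable γi γf)
  have rhs := intervalIntegral.integral_add
    (hA.intervalIntegrable (μ := MeasureTheory.volume) γi γf) (hC.intervalIntegrable γi γf)
  have hr : (∫ γ in γi..γf,
      ((deriv V (x γ) / m) * (deriv t γ)^2 + deriv (deriv x) γ) * η γ)
      = ∫ γ in γi..γf, (deriv V (x γ) * η γ / m * (deriv t γ)^2 + deriv (deriv x) γ * η γ) := by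
    congr 1
    ext γ
    ring
  simp only [zero_mul, add_zero]
  rw [hr, lhs, rhs, parts]
  ring
end

section
/- Euler–Lagrange (geodesic) equation for the time coordinate from criticality: let t, x : ℝ → ℝ be twice continuously differentiable, let V : ℝ → ℝ be continuously differentiable, let c, m ∈ ℝ with m ≠ 0, and set g(x) = c² + 2V(x)/m. Suppose that for every smooth function η : ℝ → ℝ with compact support contained in the open interval (γ_i, γ_f), the derivative at ε = 0 of ε ↦ ∫_{γ_i}^{γ_f} (1/2)·(g(x(γ))·(t'(γ) + ε·η'(γ))² − x'(γ)²) dγ vanishes. Then (d/dγ)[g(x(γ))·t'(γ)] = 0 for all γ ∈ (γ_i, γ_f). -/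
/-!
The action is a quadratic polynomial in the variation parameter `ε`, and its linear coefficient is
`∫ p η'` with `p = g(x) t'` the momentum conjugate to `t` (`first_variation`). Criticality
therefore says that `∫ p η' = 0` for all test functions `η`; since `p` is `C¹`, integration by
parts turns this into `∫ p' η = 0`. The fundamental lemma of the calculus of variations gives
`p' = 0` almost everywhere on the interval, and continuity of `p'` upgrades this to every point
(`deriv_eq_zero_of_integral_mul_deriv_eq_zero`).
-/

/-- The derivative at `ε = 0` of the action, for general continuous coefficients: `G` plays the
role of `g ∘ x`, and `u`, `v`, `w` those of `t'`, `x'`, `η'`. -/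
lemma first_variation (a b : ℝ) {G u v w : ℝ → ℝ} (hG : Continuous G) (hu : Continuous u)
    (hv : Continuous v) (hw : Continuous w) :
    HasDerivAt (fun ε : ℝ => ∫ s in a..b, (1/2 : ℝ) * (G s * (u s + ε * w s)^2 - (v s)^2))
      (∫ s in a..b, G s * u s * w s) 0 := by
  have key : (fun ε : ℝ => ∫ s in a..b, (1/2 : ℝ) * (G s * (u s + ε * w s)^2 - (v s)^2)) =
      fun ε : ℝ => (∫ s in a..b, (1/2 : ℝ) * (G s * (u s)^2 - (v s)^2))
        + ε * (∫ s in a..b, G s * u s * w s)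
        + ε^2 * (∫ s in a..b, (1/2 : ℝ) * (G s * (w s)^2)) := by
    funext ε
    rw [← intervalIntegral.integral_const_mul, ← intervalIntegral.integral_const_mul,
      ← intervalIntegral.integral_add, ← intervalIntegral.integral_add]
    · congr 1
      funext s
      ring
    all_goals exact Continuous.intervalIntegrable (by fun_prop) _ _
  rw [key]
  have h := (((hasDerivAt_id (0 : ℝ)).mul_const (∫ s in a..b, G s * u s * w s)).const_add
    (∫ s in a..b, (1/2 : ℝ) * (G s * (u s)^2 - (v s)^2))).add
    (((hasDerivAt_id (0 : ℝ)).pow 2).mul_const (∫ s in a..b, (1/2 : ℝ) * (G s * (w s)^2)))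
  exact h.congr_deriv (by simp)

/-- A `C¹` function whose weak derivative vanishes on an open interval has zero derivative at every
point of it. -/
lemma deriv_eq_zero_of_integral_mul_deriv_eq_zero {a b : ℝ} {p : ℝ → ℝ} (hp : ContDiff ℝ 1 p)
    (h : ∀ η : ℝ → ℝ, ContDiff ℝ (⊤ : ℕ∞) η → HasCompactSupport η →
      tsupport η ⊆ Set.Ioo a b → ∫ s in a..b, p s * deriv η s = 0) :
    ∀ s ∈ Set.Ioo a b, deriv p s = 0 := by
  intro s hs
  have hp' : Continuous (deriv p) := hp.continuous_deriv le_rfl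
  have hae : ∀ᵐ r : ℝ, r ∈ Set.Ioo a b → deriv p r = 0 := by
    refine isOpen_Ioo.ae_eq_zero_of_integral_contDiff_smul_eq_zero
      (hp'.locallyIntegrable.locallyIntegrableOn _) ?_
    intro η hη hc hsupp
    have hη' : Continuous (deriv η) := hη.continuous_deriv (by simp)
    have hηa : η a = 0 := image_eq_zero_of_notMem_tsupport fun hh => (hsupp hh).1.false
    have hηb : η b = 0 := image_eq_zero_of_notMem_tsupport fun hh => (hsupp hh).2.false
    have parts := intervalIntegral.integral_mul_deriv_eq_deriv_mul (a := a) (b := b)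
      (u := p) (v := η) (u' := deriv p) (v' := deriv η)
      (fun r _ => ((hp.differentiable (by simp)) r).hasDerivAt)
      (fun r _ => ((hη.differentiable (by simp)) r).hasDerivAt)
      (hp'.intervalIntegrable _ _) (hη'.intervalIntegrable _ _)
    rw [h η hη hc hsupp, hηa, hηb] at parts
    -- The test function vanishes off `(a, b)`, so integrating over `ℝ` or `a..b` is the same.
    rw [← intervalIntegral.integral_eq_integral_of_support_subset (a := a) (b := b)]
    · simp only [smul_eq_mul, mul_comm (η _)]
      linarith
    · intro r hr
      have hr' : r ∈ Function.support η := fun h0 => hr (by simp [h0])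
      exact Set.Ioo_subset_Ioc_self (hsupp (subset_tsupport η hr'))
  have heq : Set.EqOn (deriv p) (fun _ => (0 : ℝ)) (Set.Ioo a b) :=
    MeasureTheory.Measure.eqOn_open_of_ae_eq (μ := MeasureTheory.volume)
      ((MeasureTheory.ae_restrict_iff' measurableSet_Ioo).2 hae) isOpen_Ioo
      hp'.continuousOn continuousOn_const
  exact heq hs


/-- Euler–Lagrange (temporal geodesic) equation from criticality: if the first
variation of the world-line action in the time coordinate vanishes for every
smooth variation `η` compactly supported in the open interval `(γi, γf)`, then
`(d/dγ)[g(x(γ))·ṫ(γ)] = 0` on `(γi, γf)`, where `g(y) = c² + 2V(y)/m`. -/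
theorem euler_lagrange_time_coordinate
    (γi γf : ℝ) (t x : ℝ → ℝ)
    (ht : ContDiff ℝ 2 t) (hx : ContDiff ℝ 2 x)
    (V : ℝ → ℝ) (hV : ContDiff ℝ 1 V) (c m : ℝ) (hm : m ≠ 0)
    (hcrit : ∀ η : ℝ → ℝ, ContDiff ℝ (⊤ : ℕ∞) η → HasCompactSupport η →
      tsupport η ⊆ Set.Ioo γi γf →
      deriv (fun ε : ℝ => ∫ γ in γi..γf, (1/2 : ℝ) *
        ((c^2 + 2 * V (x γ) / m) * (deriv t γ + ε * deriv η γ)^2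
          - (deriv x γ)^2)) 0 = 0) :
    ∀ γ ∈ Set.Ioo γi γf,
      deriv (fun s => (c^2 + 2 * V (x s) / m) * deriv t s) γ = 0 := by
  have hxt : ContDiff ℝ 1 (deriv t) := ContDiff.deriv' (n := 1) ht
  have hxc : ContDiff ℝ 1 x := hx.of_le (by norm_num)
  have hG : ContDiff ℝ 1 (fun s => c^2 + 2 * V (x s) / m) := by
    have := hV.comp hxc
    exact contDiff_const.add ((contDiff_const.mul this).div_const m)
  refine deriv_eq_zero_of_integral_mul_deriv_eq_zero (hG.mul hxt) ?_
  intro η hη hc hsupp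
  rw [← hcrit η hη hc hsupp]
  exact (first_variation γi γf hG.continuous hxt.continuous
    (hx.continuous_deriv (by norm_num)) (hη.continuous_deriv (by simp))).deriv.symm
end

section
/- Euler–Lagrange (geodesic) equation for the space coordinate from criticality: let t, x : ℝ → ℝ be twice continuously differentiable, let V : ℝ → ℝ be continuously differentiable, and let c, m ∈ ℝ with m ≠ 0. Suppose that for every smooth function η : ℝ → ℝ with compact support contained in the open interval (γ_i, γ_f), the derivative at ε = 0 of ε ↦ ∫_{γ_i}^{γ_f} (1/2)·((c² + 2V(x(γ) + ε·η(γ))/m)·t'(γ)² − (x'(γ) + ε·η'(γ))²) dγ vanishes. Then x''(γ) + (V'(x(γ))/m)·t'(γ)² = 0 for all γ ∈ (γ_i, γ_f). -/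
/-!
The proof is the classical one. Differentiating under the integral sign
(`hasDerivAt_intervalIntegral_of_continuous`), the first variation of the action in the direction
`η` is `∫ (V'(x)/m · ṫ² · η - ẋ · η̇)`. Since `η` vanishes at the endpoints, integration by parts
turns this into `∫ η · (ẍ + V'(x)/m · ṫ²)`. Because it vanishes for every test function `η`
supported in `(γi, γf)`, the fundamental lemma of the calculus of variations gives
`ẍ + V'(x)/m · ṫ² = 0` almost everywhere there, hence everywhere by continuity.
-/

open MeasureTheory

/-- Differentiation under the integral sign over a compact interval. The derivative at `0` is
dominated by the maximum of `|F'|` on the compact set `[-1, 1] × [a, b]`. -/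
lemma hasDerivAt_intervalIntegral_of_continuous {a b : ℝ} {F F' : ℝ → ℝ → ℝ}
    (hF : ∀ ε, Continuous (F ε)) (hF' : Continuous (Function.uncurry F'))
    (hd : ∀ γ ε, HasDerivAt (fun ε => F ε γ) (F' ε γ) ε) :
    HasDerivAt (fun ε => ∫ γ in a..b, F ε γ) (∫ γ in a..b, F' 0 γ) 0 := by
  have hK : IsCompact (Set.Icc (-1 : ℝ) 1 ×ˢ Set.uIcc a b) := isCompact_Icc.prod isCompact_uIcc
  obtain ⟨C, hC⟩ := hK.exists_bound_of_continuousOn hF'.continuousOn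
  have hF'0 : Continuous (F' 0) := hF'.comp (Continuous.prodMk_right 0)
  refine (intervalIntegral.hasDerivAt_integral_of_dominated_loc_of_deriv_le
    (F := F) (F' := F') (bound := fun _ => C) (s := Set.Icc (-1 : ℝ) 1)
    (Icc_mem_nhds (by norm_num) (by norm_num))
    (Filter.Eventually.of_forall fun ε => (hF ε).aestronglyMeasurable)
    ((hF 0).intervalIntegrable _ _) hF'0.aestronglyMeasurable
    (Filter.Eventually.of_forall fun γ hγ ε hε => ?_)
    intervalIntegrable_const
    (Filter.Eventually.of_forall fun γ _ ε _ => hd γ ε)).2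
  exact hC (ε, γ) ⟨hε, Set.uIoc_subset_uIcc hγ⟩

/-- Euler–Lagrange (spatial geodesic) equation from criticality: if the first
variation of the world-line action in the space coordinate vanishes for every
smooth variation `η` compactly supported in the open interval `(γi, γf)`, then
`ẍ(γ) + (V'(x(γ))/m)·ṫ(γ)² = 0` on `(γi, γf)`. -/
theorem euler_lagrange_space_coordinate
    (γi γf : ℝ) (t x : ℝ → ℝ)
    (ht : ContDiff ℝ 2 t) (hx : ContDiff ℝ 2 x)
    (V : ℝ → ℝ) (hV : ContDiff ℝ 1 V) (c m : ℝ) (hm : m ≠ 0)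
    (hcrit : ∀ η : ℝ → ℝ, ContDiff ℝ (⊤ : ℕ∞) η → HasCompactSupport η →
      tsupport η ⊆ Set.Ioo γi γf →
      deriv (fun ε : ℝ => ∫ γ in γi..γf, (1/2 : ℝ) *
        ((c^2 + 2 * V (x γ + ε * η γ) / m) * (deriv t γ)^2
          - (deriv x γ + ε * deriv η γ)^2)) 0 = 0) :
    ∀ γ ∈ Set.Ioo γi γf,
      deriv (deriv x) γ + (deriv V (x γ) / m) * (deriv t γ)^2 = 0 := by
  have ht' : Continuous (deriv t) := ht.continuous_deriv (by norm_num)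
  have hx' : ContDiff ℝ 1 (deriv x) := by
    have h : ContDiff ℝ (1 + 1) x := by simpa [one_add_one_eq_two] using hx
    exact (contDiff_succ_iff_deriv.1 h).2.2
  have hx'' : Continuous (deriv (deriv x)) := hx'.continuous_deriv le_rfl
  have hV' : Continuous (deriv V) := hV.continuous_deriv le_rfl
  have hxc : Continuous x := hx.continuous
  have hx'c : Continuous (deriv x) := hx'.continuous
  have hVc : Continuous V := hV.continuous
  have hEL : Continuous fun γ =>
      deriv (deriv x) γ + (deriv V (x γ) / m) * (deriv t γ)^2 := by fun_prop
  intro γ hγ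
  have hlt : γi < γf := hγ.1.trans hγ.2
  have key : ∀ᵐ γ : ℝ, γ ∈ Set.Ioo γi γf →
      deriv (deriv x) γ + (deriv V (x γ) / m) * (deriv t γ)^2 = 0 := by
    refine isOpen_Ioo.ae_eq_zero_of_integral_contDiff_smul_eq_zero
      (hEL.locallyIntegrable.locallyIntegrableOn _) fun η hη hηc hηs => ?_
    have hηcont : Continuous η := hη.continuous
    have hη' : Continuous (deriv η) := hη.continuous_deriv (by simp)
    have hηd : Differentiable ℝ η := hη.differentiable (by simp)
    have hη_out : ∀ y, y ∉ Set.Ioo γi γf → η y = 0 := fun y hy =>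
      image_eq_zero_of_notMem_tsupport fun h => hy (hηs h)
    have hηi : η γi = 0 := hη_out _ (by simp)
    have hηf : η γf = 0 := hη_out _ (by simp)
    have hvar := (hasDerivAt_intervalIntegral_of_continuous (a := γi) (b := γf)
      (F := fun ε γ => (1/2 : ℝ) * ((c^2 + 2 * V (x γ + ε * η γ) / m) * (deriv t γ)^2
          - (deriv x γ + ε * deriv η γ)^2))
      (F' := fun ε γ => deriv V (x γ + ε * η γ) * η γ / m * (deriv t γ)^2
          - (deriv x γ + ε * deriv η γ) * deriv η γ)
      (fun ε => by fun_prop) (by unfold Function.uncurry; fun_prop)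
      (fun γ ε => by
        have h1 : HasDerivAt (fun ε : ℝ => x γ + ε * η γ) (η γ) ε := by
          simpa using ((hasDerivAt_id ε).mul_const (η γ)).const_add (x γ)
        have h2 : HasDerivAt (fun ε : ℝ => deriv x γ + ε * deriv η γ) (deriv η γ) ε := by
          simpa using ((hasDerivAt_id ε).mul_const (deriv η γ)).const_add (deriv x γ)
        have h3 : HasDerivAt (fun ε : ℝ => V (x γ + ε * η γ))
            (deriv V (x γ + ε * η γ) * η γ) ε :=
          ((hV.differentiable one_ne_zero) _).hasDerivAt.comp ε h1
        refine ((((((h3.const_mul 2).div_const m).const_add (c^2)).mul_const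
          ((deriv t γ)^2)).sub (h2.pow 2)).const_mul (1/2 : ℝ)).congr_deriv ?_
        push_cast
        ring)).deriv
    rw [hcrit η hη hηc hηs] at hvar
    have hparts := intervalIntegral.integral_mul_deriv_eq_deriv_mul (a := γi) (b := γf)
      (u := deriv x) (u' := deriv (deriv x)) (v := η) (v' := deriv η)
      (fun y _ => ((hx'.differentiable one_ne_zero) y).hasDerivAt)
      (fun y _ => (hηd y).hasDerivAt)
      (hx''.intervalIntegrable _ _) (hη'.intervalIntegrable _ _)
    have hint : ∫ y, η y • (deriv (deriv x) y + (deriv V (x y) / m) * (deriv t y)^2) =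
        ∫ y in γi..γf, η y • (deriv (deriv x) y + (deriv V (x y) / m) * (deriv t y)^2) := by
      rw [intervalIntegral.integral_of_le hlt.le]
      refine (setIntegral_eq_integral_of_forall_compl_eq_zero fun y hy => ?_).symm
      rw [hη_out y fun h => hy (Set.Ioo_subset_Ioc_self h), zero_smul]
    rw [hint]
    simp only [zero_mul, add_zero] at hvar
    rw [intervalIntegral.integral_sub
      (Continuous.intervalIntegrable (by fun_prop) _ _)
      (Continuous.intervalIntegrable (by fun_prop) _ _), hparts, hηi, hηf] at hvar
    have hsplit : ∫ y in γi..γf, η y • (deriv (deriv x) y + (deriv V (x y) / m) * (deriv t y)^2) =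
        (∫ y in γi..γf, deriv V (x y) * η y / m * (deriv t y)^2)
          + ∫ y in γi..γf, deriv (deriv x) y * η y := by
      rw [← intervalIntegral.integral_add
        (Continuous.intervalIntegrable (by fun_prop) _ _)
        (Continuous.intervalIntegrable (by fun_prop) _ _)]
      congr 1 with y
      rw [smul_eq_mul]
      ring
    rw [hsplit]
    linarith
  exact Measure.eqOn_open_of_ae_eq (g := fun _ => (0 : ℝ))
    ((ae_restrict_iff' measurableSet_Ioo).2 key) isOpen_Ioo hEL.continuousOn
    continuousOn_const hγ
end

section
/- Equality of the forward and backward Noether charges: let t₁, x₁, t₂, x₂ : ℝ → ℝ be differentiable with t₁', t₂' differentiable on [γ_i, γ_f], let V : ℝ → ℝ be continuous, let c, m ∈ ℝ with m ≠ 0, and set g(x) = c² + 2V(x)/m. Suppose both branches satisfy the temporal geodesic equation, i.e. (d/dγ)[g(x₁(γ))·t₁'(γ)] = 0 and (d/dγ)[g(x₂(γ))·t₂'(γ)] = 0 for all γ ∈ [γ_i, γ_f], and suppose the connecting conditions x₁(γ_f) = x₂(γ_f) and t₁'(γ_f) = t₂'(γ_f) hold. Then for all γ, γ' ∈ [γ_i,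 γ_f], g(x₁(γ))·t₁'(γ) = g(x₂(γ'))·t₂'(γ'); i.e. the Noether charge Q_{t,1} on the forward branch and Q_{t,2} on the backward branch are constant and equal to each other over the whole world-line. -/
/-- A function with vanishing derivative on `[a, b]` takes its endpoint value throughout. -/
theorem eq_at_final {a b : ℝ} (hab : a ≤ b) {f : ℝ → ℝ}
    (hf : ∀ s ∈ Set.Icc a b, HasDerivAt f 0 s) : ∀ s ∈ Set.Icc a b, f s = f b := by
  have h := constant_of_has_deriv_right_zero
    (fun s hs => (hf s hs).continuousAt.continuousWithinAt)
    (fun s hs => (hf s (Set.Ico_subset_Icc_self hs)).hasDerivWithinAt)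
  intro s hs
  rw [h s hs, h b (Set.right_mem_Icc.2 hab)]

/-- Equality of the forward and backward Noether charges: if both branches
satisfy the temporal geodesic equation `(d/dγ)[g(xₐ(γ))·ṫₐ(γ)] = 0` on
`[γi, γf]` (with `g(y) = c² + 2V(y)/m`) and the connecting conditions
`x₁(γf) = x₂(γf)`, `ṫ₁(γf) = ṫ₂(γf)` hold, then the Noether charges
`Q_{t,1} = g(x₁)·ṫ₁` and `Q_{t,2} = g(x₂)·ṫ₂` are constant and equal to each
other over the whole world-line. -/
theorem forward_backward_noether_charges_equal
    (γi γf : ℝ) (hγ : γi ≤ γf) (t₁ x₁ t₂ x₂ : ℝ → ℝ)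
    (ht₁ : Differentiable ℝ t₁) (hx₁ : Differentiable ℝ x₁)
    (ht₂ : Differentiable ℝ t₂) (hx₂ : Differentiable ℝ x₂)
    (ht₁' : DifferentiableOn ℝ (deriv t₁) (Set.Icc γi γf))
    (ht₂' : DifferentiableOn ℝ (deriv t₂) (Set.Icc γi γf))
    (V : ℝ → ℝ) (hV : Continuous V) (c m : ℝ) (hm : m ≠ 0)
    (hgeo₁ : ∀ γ ∈ Set.Icc γi γf,
      HasDerivAt (fun s => (c^2 + 2 * V (x₁ s) / m) * deriv t₁ s) 0 γ)
    (hgeo₂ : ∀ γ ∈ Set.Icc γi γf,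
      HasDerivAt (fun s => (c^2 + 2 * V (x₂ s) / m) * deriv t₂ s) 0 γ)
    (hconnx : x₁ γf = x₂ γf) (hconnt : deriv t₁ γf = deriv t₂ γf) :
    ∀ γ ∈ Set.Icc γi γf, ∀ γ' ∈ Set.Icc γi γf,
      (c^2 + 2 * V (x₁ γ) / m) * deriv t₁ γ
        = (c^2 + 2 * V (x₂ γ') / m) * deriv t₂ γ' := by
  intro γ h γ' h'
  -- Each charge is constant on the world-line, and the two agree at `γf`.
  have e₁ := eq_at_final hγ hgeo₁ γ h
  have e₂ := eq_at_final hγ hgeo₂ γ' h'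
  rw [e₁, e₂, hconnx, hconnt]
end
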